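/- arXiv:1901.09813 — 2 statements merged into one kernel-verified Lean document; each statement's English description precedes it below -/
import Mathlib

section
/- For every context index j, PMI(w_*, c_j) = (∑_{i ∈ W} PMI(w_i, c_j)) + ρ^{W,w_*}_j + σ^W_j − τ^W. (Paper's Lemma 1: a single word's PMI column equals the sum of the PMI columns of a word set plus the paraphrase error, plus the conditional-dependence error, minus the marginal-dependence error.) -/
open MeasureTheory Real Finset Matrix

namespace AnalogiesExplained

variable {Ω : Type*}

/-- Conditional probability `p(B ∣ A) = μ(A ∩ B) / μ(A)` (as a real number). -/
noncomputable def condP [MeasurableSpace Ω] (μ : Measure Ω) (A B : Set Ω) : ℝ :=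
  (μ (A ∩ B)).toReal / (μ A).toReal

/-- Pointwise mutual information `PMI(A, B) = log (μ(A ∩ B) / (μ(A)·μ(B)))`. -/
noncomputable def PMI [MeasurableSpace Ω] (μ : Measure Ω) (A B : Set Ω) : ℝ :=
  Real.log ((μ (A ∩ B)).toReal / ((μ A).toReal * (μ B).toReal))

/-- The joint event of a finite word set: `A_W = ⋂ i ∈ W, A i`. -/
def jointEvent {ι : Type*} (A : ι → Set Ω) (W : Finset ι) : Set Ω :=
  ⋂ i ∈ W, A i

/-- Paraphrase error `ρ^{W,W*}_j = log (p(B_j ∣ A_{W*}) / p(B_j ∣ A_W))`. -/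
noncomputable def rho [MeasurableSpace Ω] (μ : Measure Ω) (AW AWstar B : Set Ω) : ℝ :=
  Real.log (condP μ AWstar B / condP μ AW B)

/-- Conditional-dependence error `σ^W_j = log (p(A_W ∣ B_j) / ∏_{i ∈ W} p(A_i ∣ B_j))`. -/
noncomputable def sigma [MeasurableSpace Ω] {ι : Type*} (μ : Measure Ω) (A : ι → Set Ω)
    (W : Finset ι) (B : Set Ω) : ℝ :=
  Real.log (condP μ B (jointEvent A W) / ∏ i ∈ W, condP μ B (A i))

/-- Marginal-dependence error `τ^W = log (μ(A_W) / ∏_{i ∈ W} μ(A_i))`. -/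
noncomputable def tau [MeasurableSpace Ω] {ι : Type*} (μ : Measure Ω) (A : ι → Set Ω)
    (W : Finset ι) : ℝ :=
  Real.log ((μ (jointEvent A W)).toReal / ∏ i ∈ W, (μ (A i)).toReal)

/-! Since `PMI(A, B) = log p(B ∣ A) - log p(B)`, the paraphrase error is
`PMI(A_*, B) - PMI(A_W, B)`. By symmetry also `PMI(A, B) = log p(A ∣ B) - log p(A)`; comparing this
for `A_W` with its sum over the words of `W` leaves `σ - τ`. -/

theorem log_div_prod {ι : Type*} {s : Finset ι} {x : ℝ} {f : ι → ℝ} (hx : x ≠ 0)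
    (hf : ∀ i ∈ s, f i ≠ 0) : log (x / ∏ i ∈ s, f i) = log x - ∑ i ∈ s, log (f i) := by
  rw [log_div hx (prod_ne_zero_iff.mpr hf), log_prod hf]

section

variable [MeasurableSpace Ω] {μ : Measure Ω}

theorem pmi_comm (A B : Set Ω) : PMI μ A B = PMI μ B A := by
  rw [PMI, PMI, Set.inter_comm, mul_comm]

theorem condP_ne_zero {A B : Set Ω} (hA : (μ A).toReal ≠ 0) (hAB : (μ (A ∩ B)).toReal ≠ 0) :
    condP μ A B ≠ 0 :=
  div_ne_zero hAB hA

theorem pmi_eq_log_condP_sub_log {A B : Set Ω} (hA : (μ A).toReal ≠ 0)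
    (hB : (μ B).toReal ≠ 0) (hAB : (μ (A ∩ B)).toReal ≠ 0) :
    PMI μ A B = log (condP μ A B) - log (μ B).toReal := by
  rw [← log_div (condP_ne_zero hA hAB) hB, condP, div_div, PMI]

theorem rho_eq_pmi_sub_pmi {A A' B : Set Ω} (hA : (μ A).toReal ≠ 0) (hA' : (μ A').toReal ≠ 0)
    (hB : (μ B).toReal ≠ 0) (hAB : (μ (A ∩ B)).toReal ≠ 0) (hA'B : (μ (A' ∩ B)).toReal ≠ 0) :
    rho μ A A' B = PMI μ A' B - PMI μ A B := by
  rw [rho, log_div (condP_ne_zero hA' hA'B) (condP_ne_zero hA hAB),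
    pmi_eq_log_condP_sub_log hA' hB hA'B, pmi_eq_log_condP_sub_log hA hB hAB,
    sub_sub_sub_cancel_right]

theorem sigma_sub_tau {ι : Type*} {A : ι → Set Ω} {W : Finset ι} {B : Set Ω}
    (hA : ∀ i ∈ W, (μ (A i)).toReal ≠ 0) (hB : (μ B).toReal ≠ 0)
    (hAW : (μ (jointEvent A W)).toReal ≠ 0) (hAB : ∀ i ∈ W, (μ (A i ∩ B)).toReal ≠ 0)
    (hAWB : (μ (jointEvent A W ∩ B)).toReal ≠ 0) :
    sigma μ A W B - tau μ A W = PMI μ (jointEvent A W) B - ∑ i ∈ W, PMI μ (A i) B := by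
  have hBA : ∀ i ∈ W, (μ (B ∩ A i)).toReal ≠ 0 := by simpa only [Set.inter_comm B] using hAB
  have hBAW : (μ (B ∩ jointEvent A W)).toReal ≠ 0 := by rwa [Set.inter_comm]
  have hsigma : sigma μ A W B =
      log (condP μ B (jointEvent A W)) - ∑ i ∈ W, log (condP μ B (A i)) :=
    log_div_prod (condP_ne_zero hB hBAW) fun i hi => condP_ne_zero hB (hBA i hi)
  have htau : tau μ A W = log (μ (jointEvent A W)).toReal - ∑ i ∈ W, log (μ (A i)).toReal :=
    log_div_prod hAW hA
  have hpmi : PMI μ (jointEvent A W) B =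
      log (condP μ B (jointEvent A W)) - log (μ (jointEvent A W)).toReal := by
    rw [pmi_comm, pmi_eq_log_condP_sub_log hB hAW hBAW]
  have hsum : ∑ i ∈ W, PMI μ (A i) B =
      ∑ i ∈ W, log (condP μ B (A i)) - ∑ i ∈ W, log (μ (A i)).toReal := by
    rw [← sum_sub_distrib]
    refine sum_congr rfl fun i hi => ?_
    rw [pmi_comm, pmi_eq_log_condP_sub_log hB (hA i hi) (hBA i hi)]
  rw [hsigma, htau, hpmi, hsum, sub_sub_sub_comm]

theorem pmi_paraphrase_identity_general {ι : Type*} {A : ι → Set Ω} {Astar B : Set Ω}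
    {W : Finset ι} (hA : ∀ i ∈ W, (μ (A i)).toReal ≠ 0) (hB : (μ B).toReal ≠ 0)
    (hAs : (μ Astar).toReal ≠ 0) (hAW : (μ (jointEvent A W)).toReal ≠ 0)
    (hAB : ∀ i ∈ W, (μ (A i ∩ B)).toReal ≠ 0) (hAsB : (μ (Astar ∩ B)).toReal ≠ 0)
    (hAWB : (μ (jointEvent A W ∩ B)).toReal ≠ 0) :
    PMI μ Astar B =
      (∑ i ∈ W, PMI μ (A i) B) + rho μ (jointEvent A W) Astar B + sigma μ A W B - tau μ A W := by
  have hrho := rho_eq_pmi_sub_pmi hAW hAs hB hAWB hAsB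
  have hsigma_tau := sigma_sub_tau hA hB hAW hAB hAWB
  linarith

end

/-- **Lemma 1 (Paraphrase identity at the PMI level).** For every context index `j`,
`PMI(w_*, c_j) = (∑_{i ∈ W} PMI(w_i, c_j)) + ρ^{W,w_*}_j + σ^W_j − τ^W`. -/
theorem pmi_paraphrase_identity
    [MeasurableSpace Ω] (μ : Measure Ω) [IsProbabilityMeasure μ]
    {ι : Type*} (A : ι → Set Ω) (Astar : Set Ω) {n : ℕ} (B : Fin n → Set Ω)
    (W : Finset ι)
    (hmA : ∀ i, MeasurableSet (A i)) (hmB : ∀ j, MeasurableSet (B j))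
    (hmAs : MeasurableSet Astar)
    (hA : ∀ i ∈ W, 0 < (μ (A i)).toReal)
    (hB : ∀ j, 0 < (μ (B j)).toReal)
    (hAs : 0 < (μ Astar).toReal)
    (hAW : 0 < (μ (jointEvent A W)).toReal)
    (hAB : ∀ i ∈ W, ∀ j, 0 < (μ (A i ∩ B j)).toReal)
    (hAsB : ∀ j, 0 < (μ (Astar ∩ B j)).toReal)
    (hAWB : ∀ j, 0 < (μ (jointEvent A W ∩ B j)).toReal) :
    ∀ j, PMI μ Astar (B j) =
      (∑ i ∈ W, PMI μ (A i) (B j))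
        + rho μ (jointEvent A W) Astar (B j)
        + sigma μ A W (B j)
        - tau μ A W := by
  intro j
  exact pmi_paraphrase_identity_general (fun i hi => (hA i hi).ne') (hB j).ne' hAs.ne' hAW.ne'
    (fun i hi => (hAB i hi j).ne') (hAsB j).ne' (hAWB j).ne'

end AnalogiesExplained
end

section
/- For any finite word sets W, W_* and every context index j, ∑_{i ∈ W_*} PMI(w_i, c_j) = (∑_{i ∈ W} PMI(w_i, c_j)) + ρ^{W,W_*}_j + σ^W_j − σ^{W_*}_j − (τ^W − τ^{W_*}). (Paper's Lemma 2: generalised paraphrase identity between the summed PMI columns of two word sets.) -/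
open MeasureTheory Real Finset Matrix

namespace AnalogiesExplained

variable {Ω : Type*}

/-! Everything is compared with `PMI μ (jointEvent A W) B`, the PMI of the word set regarded as a
single event: passing to the sum of the PMIs of its words adds `τ - σ`, and `ρ` is the difference of
the two joint PMIs. -/

theorem jointEvent_subset {ι : Type*} {A : ι → Set Ω} {W : Finset ι} {i : ι} (hi : i ∈ W) :
    jointEvent A W ⊆ A i :=
  Set.biInter_subset_of_mem hi

section

variable [MeasurableSpace Ω] {μ : Measure Ω} {S T B : Set Ω}

theorem condP_ne_zero_s4 (hS : μ S ≠ ⊤) (hST : μ (S ∩ T) ≠ 0) : condP μ S T ≠ 0 :=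
  div_ne_zero
    (ENNReal.toReal_ne_zero.mpr ⟨hST, measure_ne_top_of_subset Set.inter_subset_left hS⟩)
    (ENNReal.toReal_ne_zero.mpr ⟨mt (measure_mono_null Set.inter_subset_left) hST, hS⟩)

theorem PMI_comm (μ : Measure Ω) (S T : Set Ω) : PMI μ S T = PMI μ T S := by
  rw [PMI, PMI, Set.inter_comm, mul_comm]

theorem PMI_eq_log_condP_sub_log (hS : μ S ≠ ⊤) (hT : μ T ≠ ⊤) (hST : μ (S ∩ T) ≠ 0) :
    PMI μ S T = log (condP μ S T) - log (μ T).toReal := by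
  have hT_toReal : (μ T).toReal ≠ 0 :=
    ENNReal.toReal_ne_zero.mpr ⟨mt (measure_mono_null Set.inter_subset_right) hST, hT⟩
  rw [← log_div (condP_ne_zero_s4 hS hST) hT_toReal, condP, div_div, PMI]

theorem rho_eq_PMI_sub_PMI (hS : μ S ≠ ⊤) (hT : μ T ≠ ⊤) (hB : μ B ≠ ⊤)
    (hSB : μ (S ∩ B) ≠ 0) (hTB : μ (T ∩ B) ≠ 0) :
    rho μ S T B = PMI μ T B - PMI μ S B := by
  rw [rho, log_div (condP_ne_zero_s4 hT hTB) (condP_ne_zero_s4 hS hSB),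
    PMI_eq_log_condP_sub_log hS hB hSB, PMI_eq_log_condP_sub_log hT hB hTB,
    sub_sub_sub_cancel_right]

variable {ι : Type*} {A : ι → Set Ω} {W : Finset ι}

theorem measure_inter_ne_zero_of_jointEvent (hWB : μ (jointEvent A W ∩ B) ≠ 0) {i : ι}
    (hi : i ∈ W) : μ (A i ∩ B) ≠ 0 :=
  mt (measure_mono_null (Set.inter_subset_inter_left B (jointEvent_subset hi))) hWB

theorem sigma_eq_log_sub_sum_log (hB : μ B ≠ ⊤) (hWB : μ (jointEvent A W ∩ B) ≠ 0) :
    sigma μ A W B = log (condP μ B (jointEvent A W)) - ∑ i ∈ W, log (condP μ B (A i)) := by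
  have hcond : ∀ i ∈ W, condP μ B (A i) ≠ 0 := fun i hi =>
    condP_ne_zero_s4 hB (Set.inter_comm (A i) B ▸ measure_inter_ne_zero_of_jointEvent hWB hi)
  have hcondW : condP μ B (jointEvent A W) ≠ 0 := condP_ne_zero_s4 hB (Set.inter_comm _ B ▸ hWB)
  rw [sigma, log_div hcondW (prod_ne_zero_iff.mpr hcond), log_prod hcond]

theorem tau_eq_log_sub_sum_log (hA : ∀ i ∈ W, μ (A i) ≠ ⊤) (hW : μ (jointEvent A W) ≠ ⊤)
    (hW₀ : μ (jointEvent A W) ≠ 0) :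
    tau μ A W = log (μ (jointEvent A W)).toReal - ∑ i ∈ W, log (μ (A i)).toReal := by
  have hA_toReal : ∀ i ∈ W, (μ (A i)).toReal ≠ 0 := fun i hi =>
    ENNReal.toReal_ne_zero.mpr ⟨mt (measure_mono_null (jointEvent_subset hi)) hW₀, hA i hi⟩
  have hW_toReal : (μ (jointEvent A W)).toReal ≠ 0 := ENNReal.toReal_ne_zero.mpr ⟨hW₀, hW⟩
  rw [tau, log_div hW_toReal (prod_ne_zero_iff.mpr hA_toReal), log_prod hA_toReal]

theorem sum_PMI_eq_PMI_jointEvent (hA : ∀ i ∈ W, μ (A i) ≠ ⊤) (hW : μ (jointEvent A W) ≠ ⊤)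
    (hB : μ B ≠ ⊤) (hWB : μ (jointEvent A W ∩ B) ≠ 0) :
    ∑ i ∈ W, PMI μ (A i) B = PMI μ (jointEvent A W) B - sigma μ A W B + tau μ A W := by
  have PMI_eq {S : Set Ω} (hS : μ S ≠ ⊤) (hSB : μ (S ∩ B) ≠ 0) :
      PMI μ S B = log (condP μ B S) - log (μ S).toReal := by
    rw [PMI_comm, PMI_eq_log_condP_sub_log hB hS (Set.inter_comm S B ▸ hSB)]
  have sum_PMI : ∑ i ∈ W, PMI μ (A i) B =
      ∑ i ∈ W, log (condP μ B (A i)) - ∑ i ∈ W, log (μ (A i)).toReal := by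
    rw [← sum_sub_distrib]
    exact sum_congr rfl fun i hi =>
      PMI_eq (hA i hi) (measure_inter_ne_zero_of_jointEvent hWB hi)
  rw [sum_PMI, PMI_eq hW hWB, sigma_eq_log_sub_sum_log hB hWB,
    tau_eq_log_sub_sum_log hA hW (mt (measure_mono_null Set.inter_subset_left) hWB)]
  ring

theorem pmi_generalised_paraphrase_identity_general {Wstar : Finset ι}
    (hA : ∀ i ∈ W, μ (A i) ≠ ⊤) (hAs : ∀ i ∈ Wstar, μ (A i) ≠ ⊤)
    (hW : μ (jointEvent A W) ≠ ⊤) (hWs : μ (jointEvent A Wstar) ≠ ⊤) (hB : μ B ≠ ⊤)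
    (hWB : μ (jointEvent A W ∩ B) ≠ 0) (hWsB : μ (jointEvent A Wstar ∩ B) ≠ 0) :
    ∑ i ∈ Wstar, PMI μ (A i) B =
      ∑ i ∈ W, PMI μ (A i) B
        + rho μ (jointEvent A W) (jointEvent A Wstar) B
        + sigma μ A W B - sigma μ A Wstar B
        - (tau μ A W - tau μ A Wstar) := by
  rw [sum_PMI_eq_PMI_jointEvent hA hW hB hWB, sum_PMI_eq_PMI_jointEvent hAs hWs hB hWsB,
    rho_eq_PMI_sub_PMI hW hWs hB hWB hWsB]
  ring

end

/-- **Lemma 2 (Generalised paraphrase identity at the PMI level).** For any finite word sets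
`W, W_*` and every context index `j`:
`∑_{i∈W_*} PMI(w_i,c_j) = (∑_{i∈W} PMI(w_i,c_j)) + ρ^{W,W_*}_j + σ^W_j − σ^{W_*}_j − (τ^W − τ^{W_*})`. -/
theorem pmi_generalised_paraphrase_identity
    [MeasurableSpace Ω] (μ : Measure Ω) [IsProbabilityMeasure μ]
    {ι : Type*} [DecidableEq ι] (A : ι → Set Ω) {n : ℕ} (B : Fin n → Set Ω)
    (W Wstar : Finset ι)
    (hmA : ∀ i, MeasurableSet (A i)) (hmB : ∀ j, MeasurableSet (B j))
    (hA : ∀ i ∈ W ∪ Wstar, 0 < (μ (A i)).toReal)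
    (hB : ∀ j, 0 < (μ (B j)).toReal)
    (hAW : 0 < (μ (jointEvent A W)).toReal)
    (hAWs : 0 < (μ (jointEvent A Wstar)).toReal)
    (hAB : ∀ i ∈ W ∪ Wstar, ∀ j, 0 < (μ (A i ∩ B j)).toReal)
    (hAWB : ∀ j, 0 < (μ (jointEvent A W ∩ B j)).toReal)
    (hAWsB : ∀ j, 0 < (μ (jointEvent A Wstar ∩ B j)).toReal) :
    ∀ j, (∑ i ∈ Wstar, PMI μ (A i) (B j)) =
      (∑ i ∈ W, PMI μ (A i) (B j))
        + rho μ (jointEvent A W) (jointEvent A Wstar) (B j)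
        + sigma μ A W (B j) - sigma μ A Wstar (B j)
        - (tau μ A W - tau μ A Wstar) :=
  fun j => pmi_generalised_paraphrase_identity_general
    (fun _ _ => measure_ne_top μ _) (fun _ _ => measure_ne_top μ _)
    (measure_ne_top μ _) (measure_ne_top μ _) (measure_ne_top μ _)
    (ENNReal.toReal_pos_iff.mp (hAWB j)).1.ne' (ENNReal.toReal_pos_iff.mp (hAWsB j)).1.ne'

end AnalogiesExplained
end
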